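/- The swapped composite likelihood ratio test controls the Type I error at level a for all sample sizes: for every n ∈ ℕ and a ∈ (0,1), sup_{θ*∈Θ_0} Pr_{θ*}(V̄_{α,β,n} > 1/a) ≤ a, where V̄_{α,β,n} = (V_{α,β,n}^0 + V_{α,β,n}^1)/2. -/

import Mathlib

open MeasureTheory ENNReal
open scoped BigOperators Classical

noncomputable section

/-- Division in `ℝ≥0∞` with the convention that the ratio is `0` when the
denominator is `0`. -/
def safeDiv (a b : ℝ≥0∞) : ℝ≥0∞ := if b = 0 then 0 else a / b

variable {d : ℕ} {π : Fin d → Type*} [∀ i, MeasurableSpace (π i)]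

/-- The marginal density on the coordinates in `S`, obtained by integrating a density
out over the coordinates in `[d] \ S` (as a function of the full vector, depending only
on the coordinates in `S`). -/
def marginal (μ : ∀ i, Measure (π i)) (S : Finset (Fin d))
    (f : (∀ i, π i) → ℝ≥0∞) : (∀ i, π i) → ℝ≥0∞ :=
  MeasureTheory.lmarginal μ Sᶜ f

/-- The conditional density of the coordinates in `T1` given the coordinates in `T2`,
with the convention that the ratio is `0` when the denominator is `0`. -/
def condDens (μ : ∀ i, Measure (π i)) (T1 T2 : Finset (Fin d))
    (f : (∀ i, π i) → ℝ≥0∞) (x : ∀ i, π i) : ℝ≥0∞ :=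
  safeDiv (marginal μ (T1 ∪ T2) f x) (marginal μ T2 f x)

/-- `𝕊_d`: the nonempty subsets of `[d]`. -/
abbrev Sd (d : ℕ) := {S : Finset (Fin d) // S.Nonempty}

/-- `𝕋_d`: ordered pairs of disjoint nonempty subsets of `[d]`. -/
abbrev Td (d : ℕ) := {T : Finset (Fin d) × Finset (Fin d) //
  T.1.Nonempty ∧ T.2.Nonempty ∧ Disjoint T.1 T.2}

/-- The individual composite likelihood
`p_{α,β}(x;θ) = ∏_S p_S(x_S;θ)^(α_S/γ) ∏_T p(x_{T←}|x_{T→};θ)^(β_T/γ)`,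
where `f = p(·;θ)` is the joint density. -/
def compLik (μ : ∀ i, Measure (π i)) (α : Sd d → ℝ) (β : Td d → ℝ) (γ : ℝ)
    (f : (∀ i, π i) → ℝ≥0∞) (x : ∀ i, π i) : ℝ≥0∞ :=
  (∏ S : Sd d, marginal μ S.1 f x ^ (α S / γ)) *
  (∏ T : Td d, condDens μ T.1.1 T.1.2 f x ^ (β T / γ))


theorem lmarginal_mul_dep (μ : ∀ i, Measure (π i)) [∀ i, SigmaFinite (μ i)]
    (S s : Finset (Fin d)) (hS : Disjoint S s) (f g : (∀ i, π i) → ℝ≥0∞) (hf : Measurable f)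
    (hg : DependsOn g (S : Set (Fin d))) (x : ∀ i, π i) :
    lmarginal μ s (fun y => f y * g y) x = lmarginal μ s f x * g x := by
  unfold lmarginal
  have h : ∀ y : (∀ i : s, π i), g (Function.updateFinset x s y) = g x := by
    intro y
    apply hg
    intro i hi
    have : i ∉ s := Finset.disjoint_left.mp hS hi
    simp [Function.updateFinset, this]
  simp_rw [h]
  rw [lintegral_mul_const]
  exact hf.comp measurable_updateFinset

theorem marginal_dep (μ : ∀ i, Measure (π i)) (S : Finset (Fin d))
    (f : (∀ i, π i) → ℝ≥0∞) : DependsOn (marginal μ S f) (S : Set (Fin d)) := by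
  intro x y h
  apply lmarginal_congr
  intro i hi
  apply h
  simpa using hi

theorem marginal_meas (μ : ∀ i, Measure (π i)) [∀ i, SigmaFinite (μ i)] (S : Finset (Fin d))
    (f : (∀ i, π i) → ℝ≥0∞) (hf : Measurable f) : Measurable (marginal μ S f) :=
  Measurable.lmarginal μ hf

theorem lintegral_split (μ : ∀ i, Measure (π i)) [∀ i, SigmaFinite (μ i)] (S : Finset (Fin d))
    (f : (∀ i, π i) → ℝ≥0∞) (hf : Measurable f) (x : ∀ i, π i) :
    ∫⁻ y, f y ∂(Measure.pi μ) = lmarginal μ S (marginal μ S f) x := by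
  rw [lintegral_eq_lmarginal_univ x]
  rw [← Finset.union_compl S, lmarginal_union μ f hf disjoint_compl_right]
  rfl

theorem lintegral_mul_dep (μ : ∀ i, Measure (π i)) [∀ i, SigmaFinite (μ i)] (S : Finset (Fin d))
    (f g : (∀ i, π i) → ℝ≥0∞) (hf : Measurable f) (hgm : Measurable g)
    (hg : DependsOn g (S : Set (Fin d))) (x : ∀ i, π i) :
    ∫⁻ y, f y * g y ∂(Measure.pi μ) = lmarginal μ S (fun y => marginal μ S f y * g y) x := by
  rw [lintegral_split μ S (fun y => f y * g y) (hf.mul hgm) x]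
  congr 1
  funext y
  exact lmarginal_mul_dep μ S Sᶜ disjoint_compl_right f g hf hg y

theorem marginal_good (μ : ∀ i, Measure (π i)) [∀ i, SigmaFinite (μ i)] (S : Finset (Fin d))
    (f : (∀ i, π i) → ℝ≥0∞) (hf : Measurable f) (h1 : ∫⁻ y, f y ∂(Measure.pi μ) = 1) :
    ∀ᵐ x ∂((Measure.pi μ).withDensity f), marginal μ S f x ≠ 0 ∧ marginal μ S f x ≠ ∞ := by
  have hm := marginal_meas μ S f hf
  obtain ⟨x⟩ : Nonempty (∀ i, π i) := by
    by_contra hne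
    rw [not_nonempty_iff] at hne
    simp at h1
  have key : ∀ A : Set ℝ≥0∞, MeasurableSet A →
      (Measure.pi μ).withDensity f (marginal μ S f ⁻¹' A) =
      lmarginal μ S (fun y => marginal μ S f y * A.indicator 1 (marginal μ S f y)) x := by
    intro A hA
    rw [withDensity_apply _ (hm hA), ← lintegral_indicator (hm hA)]
    rw [← lintegral_mul_dep μ S f (fun y => A.indicator 1 (marginal μ S f y)) hf
      ((measurable_one.indicator hA).comp hm)
      (fun a b hab => by simp only [marginal_dep μ S f hab])]
    congr 1
    funext y
    by_cases hy : marginal μ S f y ∈ A <;> simp [Set.indicator, hy]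
  rw [ae_iff]
  have h0 : (Measure.pi μ).withDensity f (marginal μ S f ⁻¹' {0}) = 0 := by
    rw [key _ (measurableSet_singleton _)]
    have : (fun y => marginal μ S f y * ({0} : Set ℝ≥0∞).indicator 1 (marginal μ S f y))
        = fun _ => 0 := by
      funext y
      by_cases hy : marginal μ S f y = 0 <;> simp [hy]
    rw [this]; simp [lmarginal]
  have ht : (Measure.pi μ).withDensity f (marginal μ S f ⁻¹' {∞}) = 0 := by
    have hlt : (Measure.pi μ).withDensity f (marginal μ S f ⁻¹' {∞}) ≠ ∞ := by
      apply ne_top_of_le_ne_top _ (measure_mono (Set.subset_univ _))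
      rw [withDensity_apply _ MeasurableSet.univ]; simp [h1]
    have hd2 : (Measure.pi μ).withDensity f (marginal μ S f ⁻¹' {∞}) =
        2 * (Measure.pi μ).withDensity f (marginal μ S f ⁻¹' {∞}) := by
      rw [key _ (measurableSet_singleton _)]
      unfold lmarginal
      rw [← lintegral_const_mul' _ _ (by simp)]
      congr 1
      funext y
      by_cases hy : marginal μ S f (Function.updateFinset x S y) = ∞ <;> simp [hy]
    rw [two_mul] at hd2
    by_contra hne
    exact absurd hd2.symm (ENNReal.lt_add_right hlt hne).ne'
  refine measure_mono_null ?_ (measure_union_null h0 ht)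
  intro y hy
  simp only [Set.mem_ofPred_eq, not_and_or, not_not] at hy
  simpa using hy

theorem lintegral_div_marginal (μ : ∀ i, Measure (π i)) [∀ i, SigmaFinite (μ i)]
    (S : Finset (Fin d))
    (f h : (∀ i, π i) → ℝ≥0∞) (hf : Measurable f) (hhm : Measurable h)
    (hh : DependsOn h (S : Set (Fin d))) (x : ∀ i, π i) :
    ∫⁻ y, h y / marginal μ S f y ∂((Measure.pi μ).withDensity f) ≤ lmarginal μ S h x := by
  have hm := marginal_meas μ S f hf
  rw [lintegral_withDensity_eq_lintegral_mul (g := fun y => h y / marginal μ S f y) _ hf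
    (hhm.div hm)]
  simp only [Pi.mul_apply]
  rw [lintegral_mul_dep μ S f (fun y => h y / marginal μ S f y) hf (hhm.div hm)
    (fun a b hab => by simp only [marginal_dep μ S f hab, hh hab]) x]
  apply lmarginal_mono
  intro y
  exact ENNReal.mul_div_le

theorem safeDiv_le (a b : ℝ≥0∞) : safeDiv a b ≤ a / b := by
  unfold safeDiv; split_ifs <;> simp

theorem safeDiv_meas {A : Type*} [MeasurableSpace A] {f g : A → ℝ≥0∞} (hf : Measurable f)
    (hg : Measurable g) : Measurable (fun x => safeDiv (f x) (g x)) := by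
  unfold safeDiv
  exact Measurable.ite (hg (measurableSet_singleton 0)) measurable_const (hf.div hg)

theorem lintegral_S (μ : ∀ i, Measure (π i)) [∀ i, SigmaFinite (μ i)]
    (S : Finset (Fin d))
    (f q : (∀ i, π i) → ℝ≥0∞) (hf : Measurable f) (hq : Measurable q)
    (hq1 : ∫⁻ y, q y ∂(Measure.pi μ) = 1) (x : ∀ i, π i) :
    ∫⁻ y, marginal μ S q y / marginal μ S f y ∂((Measure.pi μ).withDensity f) ≤ 1 := by
  refine (lintegral_div_marginal μ S f _ hf (marginal_meas μ S q hq) (marginal_dep μ S q) x).trans ?_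
  rw [← lintegral_split μ S q hq x, hq1]

theorem lintegral_T (μ : ∀ i, Measure (π i)) [∀ i, SigmaFinite (μ i)]
    (A B : Finset (Fin d)) (hAB : Disjoint A B)
    (f q : (∀ i, π i) → ℝ≥0∞) (hf : Measurable f) (hq : Measurable q)
    (hf1 : ∫⁻ y, f y ∂(Measure.pi μ) = 1) (x : ∀ i, π i) :
    ∫⁻ y, condDens μ A B q y / condDens μ A B f y ∂((Measure.pi μ).withDensity f) ≤ 1 := by
  have mq := marginal_meas μ (A ∪ B) q hq
  have mqB := marginal_meas μ B q hq
  have mfB := marginal_meas μ B f hf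
  have hr : Measurable (condDens μ A B q) := safeDiv_meas mq mqB
  have dB : ∀ g, DependsOn (marginal μ B g) ((A ∪ B : Finset (Fin d)) : Set (Fin d)) := by
    intro g a b hab
    exact marginal_dep μ B g (fun i hi => hab i (by simp at hi ⊢; tauto))
  have dr : DependsOn (condDens μ A B q) ((A ∪ B : Finset (Fin d)) : Set (Fin d)) := by
    intro a b hab
    unfold condDens
    rw [dB q hab, marginal_dep μ (A ∪ B) q hab]
  have e : ∫⁻ y, condDens μ A B q y / condDens μ A B f y ∂((Measure.pi μ).withDensity f)
      = ∫⁻ y, (condDens μ A B q y * marginal μ B f y) / marginal μ (A ∪ B) f y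
        ∂((Measure.pi μ).withDensity f) := by
    apply lintegral_congr_ae
    filter_upwards [marginal_good μ B f hf hf1, marginal_good μ (A ∪ B) f hf hf1] with y h1 h2
    have : condDens μ A B f y = marginal μ (A ∪ B) f y / marginal μ B f y := by
      simp [condDens, safeDiv, h1.1]
    rw [this, div_eq_mul_inv, ENNReal.inv_div (Or.inl h1.2) (Or.inl h1.1), mul_div_assoc]
  rw [e]
  refine (lintegral_div_marginal μ (A ∪ B) f (fun y => condDens μ A B q y * marginal μ B f y)
    hf (hr.mul mfB)
    (fun a b hab => by simp only [dr hab, dB f hab]) x).trans ?_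
  rw [lmarginal_union' μ (fun y => condDens μ A B q y * marginal μ B f y) (hr.mul mfB) hAB]
  rw [← hf1, lintegral_split μ B f hf x]
  apply lmarginal_mono
  intro y
  rw [lmarginal_mul_dep μ B A hAB.symm _ _ hr (marginal_dep μ B f)]
  refine mul_le_of_le_one_left zero_le ?_
  have : lmarginal μ A (condDens μ A B q) y
      ≤ lmarginal μ A (fun z => marginal μ (A ∪ B) q z * (marginal μ B q z)⁻¹) y := by
    apply lmarginal_mono
    intro z
    exact safeDiv_le _ _
  refine this.trans ?_
  rw [lmarginal_mul_dep μ B A hAB.symm _ (fun z => (marginal μ B q z)⁻¹) mq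
    (fun a b hab => by simp only [marginal_dep μ B q hab])]
  have : lmarginal μ A (marginal μ (A ∪ B) q) y = marginal μ B q y := by
    unfold marginal
    rw [← lmarginal_union μ q hq]
    · congr 1
      ext i
      have : i ∈ A → i ∉ B := fun h => Finset.disjoint_left.mp hAB h
      simp; tauto
    · rw [Finset.disjoint_left]; intro i hi; simp [hi]
  rw [this]
  exact ENNReal.mul_inv_le_one _

theorem compLik_meas (μ : ∀ i, Measure (π i)) [∀ i, SigmaFinite (μ i)]
    {Θ : Type*} [MeasurableSpace Θ] (p : Θ → (∀ i, π i) → ℝ≥0∞)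
    (hp : Measurable (Function.uncurry p))
    (α : Sd d → ℝ) (β : Td d → ℝ) (γ : ℝ) :
    Measurable (fun z : Θ × (∀ i, π i) => compLik μ α β γ (p z.1) z.2) := by
  have hm : ∀ S, Measurable (fun z : Θ × (∀ i, π i) => marginal μ S (p z.1) z.2) := by
    intro S
    unfold marginal lmarginal
    apply Measurable.lintegral_prod_right (f := fun (z : Θ × (∀ i, π i)) y =>
      p z.1 (Function.updateFinset z.2 Sᶜ y))
    have : Measurable fun w : (Θ × (∀ i, π i)) × (∀ i : (Sᶜ : Finset (Fin d)), π i) =>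
        (w.1.1, Function.updateFinset w.1.2 Sᶜ w.2) :=
      (measurable_fst.comp measurable_fst).prodMk
        (measurable_updateFinset'.comp ((measurable_snd.comp measurable_fst).prodMk measurable_snd))
    exact hp.comp this
  unfold compLik
  refine Measurable.mul ?_ ?_
  · exact Finset.measurable_fun_prod _ fun S _ => (hm S.1).pow_const _
  · refine Finset.measurable_fun_prod _ fun T _ => Measurable.pow_const ?_ _
    exact safeDiv_meas (hm _) (hm _)

theorem condDens_good (μ : ∀ i, Measure (π i)) [∀ i, SigmaFinite (μ i)]
    (f : (∀ i, π i) → ℝ≥0∞) (hf : Measurable f) (h1 : ∫⁻ y, f y ∂(Measure.pi μ) = 1) :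
    ∀ᵐ x ∂((Measure.pi μ).withDensity f),
      (∀ S : Sd d, marginal μ S.1 f x ≠ 0 ∧ marginal μ S.1 f x ≠ ∞) ∧
      (∀ T : Td d, condDens μ T.1.1 T.1.2 f x ≠ 0 ∧ condDens μ T.1.1 T.1.2 f x ≠ ∞) := by
  have : ∀ᵐ x ∂((Measure.pi μ).withDensity f), ∀ S : Finset (Fin d),
      marginal μ S f x ≠ 0 ∧ marginal μ S f x ≠ ∞ :=
    ae_all_iff.2 fun S => marginal_good μ S f hf h1
  filter_upwards [this] with x hx
  refine ⟨fun S => hx S.1, fun T => ?_⟩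
  have h2 := hx T.1.2
  have h3 := hx (T.1.1 ∪ T.1.2)
  unfold condDens safeDiv
  rw [if_neg h2.1]
  exact ⟨ENNReal.div_ne_zero.2 ⟨h3.1, h2.2⟩, ENNReal.div_ne_top h3.2 h2.1⟩

theorem compLik_good (μ : ∀ i, Measure (π i)) [∀ i, SigmaFinite (μ i)]
    (α : Sd d → ℝ) (β : Td d → ℝ) (γ : ℝ)
    (hα : ∀ S, 0 ≤ α S) (hβ : ∀ T, 0 ≤ β T) (hγpos : 0 < γ)
    (f : (∀ i, π i) → ℝ≥0∞) (hf : Measurable f) (h1 : ∫⁻ y, f y ∂(Measure.pi μ) = 1) :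
    ∀ᵐ x ∂((Measure.pi μ).withDensity f),
      compLik μ α β γ f x ≠ 0 ∧ compLik μ α β γ f x ≠ ∞ := by
  filter_upwards [condDens_good μ f hf h1] with x hx
  unfold compLik
  have a1 : ∀ S, 0 ≤ α S / γ := fun S => div_nonneg (hα S) hγpos.le
  have a2 : ∀ T, 0 ≤ β T / γ := fun S => div_nonneg (hβ S) hγpos.le
  constructor
  · refine mul_ne_zero (Finset.prod_ne_zero_iff.2 fun S _ => ?_)
      (Finset.prod_ne_zero_iff.2 fun T _ => ?_)
    · exact (ENNReal.rpow_pos (pos_iff_ne_zero.2 (hx.1 S).1) (hx.1 S).2).ne'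
    · exact (ENNReal.rpow_pos (pos_iff_ne_zero.2 (hx.2 T).1) (hx.2 T).2).ne'
  · refine ENNReal.mul_ne_top (ENNReal.prod_ne_top fun S _ => ?_)
      (ENNReal.prod_ne_top fun T _ => ?_)
    · exact ENNReal.rpow_ne_top_of_nonneg (a1 S) (hx.1 S).2
    · exact ENNReal.rpow_ne_top_of_nonneg (a2 T) (hx.2 T).2

theorem one_obs (μ : ∀ i, Measure (π i)) [∀ i, SigmaFinite (μ i)]
    (α : Sd d → ℝ) (β : Td d → ℝ) (γ : ℝ) (hγ : γ = ∑ S, α S + ∑ T, β T)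
    (hα : ∀ S, 0 ≤ α S) (hβ : ∀ T, 0 ≤ β T) (hγpos : 0 < γ)
    (f q : (∀ i, π i) → ℝ≥0∞) (hf : Measurable f) (hq : Measurable q)
    (hf1 : ∫⁻ y, f y ∂(Measure.pi μ) = 1) (hq1 : ∫⁻ y, q y ∂(Measure.pi μ) = 1) :
    ∫⁻ y, compLik μ α β γ q y / compLik μ α β γ f y ∂((Measure.pi μ).withDensity f) ≤ 1 := by
  obtain ⟨x⟩ : Nonempty (∀ i, π i) := by
    by_contra hne
    rw [not_nonempty_iff] at hne
    simp at hf1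
  have a1 : ∀ S, 0 ≤ α S / γ := fun S => div_nonneg (hα S) hγpos.le
  have a2 : ∀ T, 0 ≤ β T / γ := fun S => div_nonneg (hβ S) hγpos.le
  let w : Sd d ⊕ Td d → ℝ := Sum.elim (fun S => α S / γ) (fun T => β T / γ)
  let G : Sd d ⊕ Td d → (∀ i, π i) → ℝ≥0∞ := Sum.elim
    (fun S y => marginal μ S.1 q y / marginal μ S.1 f y)
    (fun T y => condDens μ T.1.1 T.1.2 q y / condDens μ T.1.1 T.1.2 f y)
  have hw0 : ∀ i, 0 ≤ w i := by rintro (S | T); exacts [a1 S, a2 T]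
  have hw1 : ∑ i, w i = 1 := by
    rw [Fintype.sum_sum_type]
    simp only [w, Sum.elim_inl, Sum.elim_inr]
    rw [← Finset.sum_div, ← Finset.sum_div, ← add_div, ← hγ, div_self hγpos.ne']
  have hG : ∀ i, Measurable (G i) := by
    rintro (S | T)
    · exact (marginal_meas μ _ q hq).div (marginal_meas μ _ f hf)
    · exact (safeDiv_meas (marginal_meas μ _ q hq) (marginal_meas μ _ q hq)).div
        (safeDiv_meas (marginal_meas μ _ f hf) (marginal_meas μ _ f hf))
  have hGi : ∀ i, ∫⁻ y, G i y ∂((Measure.pi μ).withDensity f) ≤ 1 := by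
    rintro (S | T)
    · exact lintegral_S μ S.1 f q hf hq hq1 x
    · exact lintegral_T μ _ _ T.2.2.2 f q hf hq hf1 x
  have e : ∫⁻ y, compLik μ α β γ q y / compLik μ α β γ f y ∂((Measure.pi μ).withDensity f)
      = ∫⁻ y, ∏ i, G i y ^ w i ∂((Measure.pi μ).withDensity f) := by
    apply lintegral_congr_ae
    filter_upwards [condDens_good μ f hf hf1] with y hy
    rw [Fintype.prod_sum_type]
    simp only [w, G, Sum.elim_inl, Sum.elim_inr]
    simp_rw [ENNReal.div_rpow_of_nonneg _ _ (a1 _), ENNReal.div_rpow_of_nonneg _ _ (a2 _)]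
    have n1 : ∀ S : Sd d, marginal μ S.1 f y ^ (α S / γ) ≠ ∞ := fun S =>
      ENNReal.rpow_ne_top_of_nonneg (a1 S) (hy.1 S).2
    have n2 : ∀ T : Td d, condDens μ T.1.1 T.1.2 f y ^ (β T / γ) ≠ ∞ := fun T =>
      ENNReal.rpow_ne_top_of_nonneg (a2 T) (hy.2 T).2
    rw [ENNReal.prod_div_distrib (fun i _ j _ _ => Or.inr (n1 j)),
      ENNReal.prod_div_distrib (fun i _ j _ _ => Or.inr (n2 j))]
    unfold compLik
    rw [div_eq_mul_inv, ENNReal.mul_inv (Or.inr (ENNReal.prod_ne_top fun T _ => n2 T))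
      (Or.inl (ENNReal.prod_ne_top fun S _ => n1 S)), div_eq_mul_inv, div_eq_mul_inv]
    ring
  rw [e]
  refine (ENNReal.lintegral_prod_norm_pow_le _ (fun i _ => (hG i).aemeasurable) hw1
    (fun i _ => hw0 i)).trans ?_
  exact Finset.prod_le_one' fun i _ => ENNReal.rpow_le_one (hGi i) (hw0 i)

theorem lintegral_pi_prod {A : Type*} [MeasurableSpace A] (P : Measure A) [IsProbabilityMeasure P]
    (n : ℕ) (g : A → ℝ≥0∞) (hg : Measurable g) :
    ∫⁻ x, ∏ j : Fin n, g (x j) ∂(Measure.pi fun _ : Fin n => P) = (∫⁻ y, g y ∂P) ^ n := by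
  have hi := ProbabilityTheory.iIndepFun_pi (μ := fun _ : Fin n => P) (X := fun _ => g)
    (fun _ => hg.aemeasurable)
  rw [ProbabilityTheory.lintegral_prod_eq_prod_lintegral_of_indepFun Finset.univ
    (fun j (x : Fin n → A) => g (x j)) hi (fun j => hg.comp (measurable_pi_apply j))]
  have : ∀ j : Fin n, ∫⁻ x, g (x j) ∂(Measure.pi fun _ : Fin n => P) = ∫⁻ y, g y ∂P := by
    intro j
    exact (measurePreserving_eval (fun _ : Fin n => P) j).lintegral_comp hg
  simp [this]

theorem n_obs (μ : ∀ i, Measure (π i)) [∀ i, SigmaFinite (μ i)]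
    (α : Sd d → ℝ) (β : Td d → ℝ) (γ : ℝ) (hγ : γ = ∑ S, α S + ∑ T, β T)
    (hα : ∀ S, 0 ≤ α S) (hβ : ∀ T, 0 ≤ β T) (hγpos : 0 < γ)
    (f q : (∀ i, π i) → ℝ≥0∞) (hf : Measurable f) (hq : Measurable q)
    (hf1 : ∫⁻ y, f y ∂(Measure.pi μ) = 1) (hq1 : ∫⁻ y, q y ∂(Measure.pi μ) = 1) (n : ℕ) 
    (hfm : Measurable (compLik μ α β γ f)) (hqm : Measurable (compLik μ α β γ q)) :
    ∫⁻ x, (∏ j : Fin n, compLik μ α β γ q (x j)) / (∏ j : Fin n, compLik μ α β γ f (x j))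
      ∂(Measure.pi fun _ : Fin n => (Measure.pi μ).withDensity f) ≤ 1 := by
  have : IsProbabilityMeasure ((Measure.pi μ).withDensity f) :=
    ⟨by rw [withDensity_apply _ MeasurableSet.univ]; simp [hf1]⟩
  have e : ∫⁻ x, (∏ j : Fin n, compLik μ α β γ q (x j)) / (∏ j : Fin n, compLik μ α β γ f (x j))
      ∂(Measure.pi fun _ : Fin n => (Measure.pi μ).withDensity f) =
      ∫⁻ x, ∏ j : Fin n, (compLik μ α β γ q (x j) / compLik μ α β γ f (x j))
      ∂(Measure.pi fun _ : Fin n => (Measure.pi μ).withDensity f) := by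
    apply lintegral_congr_ae
    have hall : ∀ᵐ x ∂(Measure.pi fun _ : Fin n => (Measure.pi μ).withDensity f),
        ∀ j, compLik μ α β γ f (x j) ≠ 0 ∧ compLik μ α β γ f (x j) ≠ ∞ :=
      Filter.eventually_all.2 fun j => (Measure.tendsto_eval_ae_ae
        (μ := fun _ : Fin n => (Measure.pi μ).withDensity f) (i := j)).eventually
        (compLik_good μ α β γ hα hβ hγpos f hf hf1)
    filter_upwards [hall] with x hx
    rw [ENNReal.prod_div_distrib (fun i _ j _ _ => Or.inr (hx j).2)]
  rw [e, lintegral_pi_prod _ n (fun y => compLik μ α β γ q y / compLik μ α β γ f y) (hqm.div hfm)]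
  exact pow_le_one' (one_obs μ α β γ hγ hα hβ hγpos f q hf hq hf1 hq1) n

theorem ratio_meas {Θ E : Type*} [MeasurableSpace Θ] [MeasurableSpace E] (n : ℕ)
    (C : Θ → E → ℝ≥0∞) (hC : Measurable fun z : Θ × E => C z.1 z.2) (θs : Θ) :
    Measurable (fun z : Θ × (Fin n → E) =>
      (∏ j : Fin n, C z.1 (z.2 j)) / (∏ j : Fin n, C θs (z.2 j))) := by
  refine Measurable.div ?_ ?_
  · refine Finset.measurable_fun_prod _ fun j _ => ?_
    exact hC.comp (measurable_fst.prodMk ((measurable_pi_apply j).comp measurable_snd))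
  · refine Finset.measurable_fun_prod _ fun j _ => ?_
    exact hC.comp (measurable_const.prodMk ((measurable_pi_apply j).comp measurable_snd))

theorem core_bound {Θ E Ω : Type*} [MeasurableSpace Θ] [MeasurableSpace E] [MeasurableSpace Ω]
    (n : ℕ) (C : Θ → E → ℝ≥0∞) (hC : Measurable fun z : Θ × E => C z.1 z.2) (θstar : Θ)
    (P : Measure (Fin n → E)) [IsProbabilityMeasure P]
    (hRint : ∀ θ, ∫⁻ x, (∏ j : Fin n, C θ (x j)) / (∏ j : Fin n, C θstar (x j)) ∂P ≤ 1)
    (Pr : Measure Ω) (X0 X1 : Fin n → Ω → E)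
    (hX0 : ∀ j, Measurable (X0 j)) (hX1 : ∀ j, Measurable (X1 j))
    (hlaw : Measure.map (fun ω => (fun j => X0 j ω, fun j => X1 j ω)) Pr = P.prod P)
    (t0 t1 : (Fin n → E) → Θ) (ht0 : Measurable t0) (ht1 : Measurable t1)
    (θhat0 θhat1 : Ω → Θ)
    (h0 : ∀ ω, (∏ j : Fin n, C θstar (X0 j ω)) ≤ ∏ j : Fin n, C (θhat0 ω) (X0 j ω))
    (h1 : ∀ ω, (∏ j : Fin n, C θstar (X1 j ω)) ≤ ∏ j : Fin n, C (θhat1 ω) (X1 j ω))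
    (a : ℝ) (ha0 : 0 < a) :
    Pr {ω | 1 / ENNReal.ofReal a <
        (safeDiv (∏ j : Fin n, C (t1 fun j' => X1 j' ω) (X0 j ω))
            (∏ j : Fin n, C (θhat0 ω) (X0 j ω))
          + safeDiv (∏ j : Fin n, C (t0 fun j' => X0 j' ω) (X1 j ω))
            (∏ j : Fin n, C (θhat1 ω) (X1 j ω))) / 2}
      ≤ ENNReal.ofReal a := by
  let R : Θ → (Fin n → E) → ℝ≥0∞ := fun θ x =>
    (∏ j : Fin n, C θ (x j)) / (∏ j : Fin n, C θstar (x j))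
  have hR : Measurable (fun z : Θ × (Fin n → E) => R z.1 z.2) := ratio_meas n C hC θstar
  let F0 : (Fin n → E) × (Fin n → E) → ℝ≥0∞ := fun z => R (t1 z.2) z.1
  let F1 : (Fin n → E) × (Fin n → E) → ℝ≥0∞ := fun z => R (t0 z.1) z.2
  have hF0 : Measurable F0 := hR.comp ((ht1.comp measurable_snd).prodMk measurable_fst)
  have hF1 : Measurable F1 := hR.comp ((ht0.comp measurable_fst).prodMk measurable_snd)
  have i0 : ∫⁻ z, F0 z ∂(P.prod P) ≤ 1 := by
    rw [lintegral_prod_symm _ hF0.aemeasurable]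
    calc _ ≤ ∫⁻ _, 1 ∂P := lintegral_mono fun y => hRint _
      _ = 1 := by simp
  have i1 : ∫⁻ z, F1 z ∂(P.prod P) ≤ 1 := by
    rw [lintegral_prod _ hF1.aemeasurable]
    calc _ ≤ ∫⁻ _, 1 ∂P := lintegral_mono fun y => hRint _
      _ = 1 := by simp
  let XX : Ω → (Fin n → E) × (Fin n → E) :=
    fun ω => (fun j => X0 j ω, fun j => X1 j ω)
  have hXX : Measurable XX :=
    (measurable_pi_lambda _ hX0).prodMk (measurable_pi_lambda _ hX1)
  let W : Ω → ℝ≥0∞ := fun ω => (F0 (XX ω) + F1 (XX ω)) / 2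
  have hFm : Measurable fun z => (F0 z + F1 z) / 2 := (hF0.add hF1).div_const 2
  have hW : Measurable W := hFm.comp hXX
  have hWint : ∫⁻ ω, W ω ∂Pr ≤ 1 := by
    have : ∫⁻ ω, W ω ∂Pr = ∫⁻ z, (F0 z + F1 z) / 2 ∂(P.prod P) := by
      rw [← hlaw, lintegral_map hFm hXX]
    rw [this]
    simp_rw [div_eq_mul_inv]
    rw [lintegral_mul_const' _ _ (by simp), lintegral_add_left hF0]
    calc _ ≤ (1 + 1 : ℝ≥0∞) * 2⁻¹ := by gcongr
      _ = 1 := by rw [one_add_one_eq_two]; exact ENNReal.mul_inv_cancel (by simp) (by simp)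
  have ha : ENNReal.ofReal a ≠ 0 := by simpa using ha0
  have hsub : ∀ ω, (safeDiv
            (∏ j : Fin n, C (t1 fun j' => X1 j' ω) (X0 j ω))
            (∏ j : Fin n, C (θhat0 ω) (X0 j ω))
          + safeDiv
            (∏ j : Fin n, C (t0 fun j' => X0 j' ω) (X1 j ω))
            (∏ j : Fin n, C (θhat1 ω) (X1 j ω))) / 2 ≤ W ω := by
    intro ω
    refine ENNReal.div_le_div_right (add_le_add ?_ ?_) 2
    · exact (safeDiv_le _ _).trans (ENNReal.div_le_div_left (h0 ω) _)
    · exact (safeDiv_le _ _).trans (ENNReal.div_le_div_left (h1 ω) _)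
  calc _ ≤ Pr {ω | 1 / ENNReal.ofReal a ≤ W ω} :=
        measure_mono fun ω hω => (le_of_lt hω).trans (hsub ω)
    _ ≤ (∫⁻ ω, W ω ∂Pr) / (1 / ENNReal.ofReal a) :=
        meas_ge_le_lintegral_div hW.aemeasurable (by simp) (by simp [ha])
    _ ≤ 1 / (1 / ENNReal.ofReal a) := ENNReal.div_le_div_right hWint _
    _ = ENNReal.ofReal a := by simp

/-- The swapped composite likelihood ratio test controls the Type I
error at level `a` for all sample sizes: for every `n ∈ ℕ` and `a ∈ (0,1)`,
`sup_{θ*∈Θ₀} Pr_{θ*}(V̄_{α,β,n} > 1/a) ≤ a`,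
where `V̄_{α,β,n} = (V_{α,β,n}^0 + V_{α,β,n}^1)/2`. -/
theorem swapped_CLRT_type_I_error
    {d : ℕ} (hd : 1 ≤ d)
    {π : Fin d → Type*} [∀ i, MeasurableSpace (π i)]
    (μ : ∀ i, Measure (π i)) [∀ i, SigmaFinite (μ i)]
    {Θ : Type*} [MeasurableSpace Θ]
    (p : Θ → (∀ i, π i) → ℝ≥0∞)
    (hp_meas : Measurable (Function.uncurry p))
    (hp_prob : ∀ θ : Θ, ∫⁻ x, p θ x ∂(Measure.pi μ) = 1)
    (α : Sd d → ℝ) (β : Td d → ℝ)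
    (hα : ∀ S, 0 ≤ α S) (hβ : ∀ T, 0 ≤ β T)
    (γ : ℝ) (hγ : γ = ∑ S, α S + ∑ T, β T) (hγpos : 0 < γ)
    {Ω : Type*} [MeasurableSpace Ω]
    (Pr : Measure Ω) [IsProbabilityMeasure Pr]
    (θstar : Θ) (n : ℕ)
    -- the two halves `X_n^0` and `X_n^1` of the i.i.d. sample of size `2n`
    (X0 X1 : Fin n → Ω → (∀ i, π i))
    (hX0 : ∀ j, Measurable (X0 j)) (hX1 : ∀ j, Measurable (X1 j))
    -- the `2n` observations are i.i.d. with density `p(·;θ*)` w.r.t. `μ`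
    (hlaw : Measure.map (fun ω => (fun j => X0 j ω, fun j => X1 j ω)) Pr
      = (Measure.pi fun _ : Fin n => (Measure.pi μ).withDensity (p θstar)).prod
          (Measure.pi fun _ : Fin n => (Measure.pi μ).withDensity (p θstar)))
    -- the estimators `θ̃_n^0`, `θ̃_n^1` are measurable functions of `X_n^0`, `X_n^1` alone
    (t0 t1 : (Fin n → ∀ i, π i) → Θ)
    (ht0 : Measurable t0) (ht1 : Measurable t1)
    -- null hypothesis parameter space and maximum composite likelihood estimators over `Θ₀`
    (Θ0 : Set Θ)
    (θhat0 θhat1 : Ω → Θ)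
    (hθhat0_meas : @Measurable Ω Θ
      (MeasurableSpace.comap (fun ω => fun j => X0 j ω)
        (inferInstance : MeasurableSpace (Fin n → ∀ i, π i))) _ θhat0)
    (hθhat1_meas : @Measurable Ω Θ
      (MeasurableSpace.comap (fun ω => fun j => X1 j ω)
        (inferInstance : MeasurableSpace (Fin n → ∀ i, π i))) _ θhat1)
    (hθhat0_mem : ∀ ω, θhat0 ω ∈ Θ0) (hθhat1_mem : ∀ ω, θhat1 ω ∈ Θ0)
    (hθhat0_max : ∀ ω, ∀ θ ∈ Θ0,
      (∏ j : Fin n, compLik μ α β γ (p θ) (X0 j ω))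
        ≤ ∏ j : Fin n, compLik μ α β γ (p (θhat0 ω)) (X0 j ω))
    (hθhat1_max : ∀ ω, ∀ θ ∈ Θ0,
      (∏ j : Fin n, compLik μ α β γ (p θ) (X1 j ω))
        ≤ ∏ j : Fin n, compLik μ α β γ (p (θhat1 ω)) (X1 j ω))
    -- the DGP parameter lies in the null hypothesis set (Type I error regime)
    (hθstar : θstar ∈ Θ0)
    (a : ℝ) (ha0 : 0 < a) (ha1 : a < 1) :
    Pr {ω | 1 / ENNReal.ofReal a <
        (safeDiv
            (∏ j : Fin n, compLik μ α β γ (p (t1 fun j' => X1 j' ω)) (X0 j ω))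
            (∏ j : Fin n, compLik μ α β γ (p (θhat0 ω)) (X0 j ω))
          + safeDiv
            (∏ j : Fin n, compLik μ α β γ (p (t0 fun j' => X0 j' ω)) (X1 j ω))
            (∏ j : Fin n, compLik μ α β γ (p (θhat1 ω)) (X1 j ω))) / 2}
      ≤ ENNReal.ofReal a := by
  have hps : ∀ θ, Measurable (p θ) := fun θ => hp_meas.of_uncurry_left
  have hc := compLik_meas μ p hp_meas α β γ
  have hcs : ∀ θ, Measurable (compLik μ α β γ (p θ)) := fun θ =>
    hc.comp (measurable_const.prodMk measurable_id)
  have hPp : IsProbabilityMeasure ((Measure.pi μ).withDensity (p θstar)) :=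
    ⟨by rw [withDensity_apply _ MeasurableSet.univ]; simp [hp_prob]⟩
  exact core_bound n (fun θ x => compLik μ α β γ (p θ) x) hc θstar
    (Measure.pi fun _ : Fin n => (Measure.pi μ).withDensity (p θstar))
    (fun θ => n_obs μ α β γ hγ hα hβ hγpos (p θstar) (p θ) (hps _) (hps _) (hp_prob _)
      (hp_prob _) n (hcs _) (hcs _))
    Pr X0 X1 hX0 hX1 hlaw t0 t1 ht0 ht1 θhat0 θhat1
    (fun ω => hθhat0_max ω _ hθstar) (fun ω => hθhat1_max ω _ hθstar) a ha0
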